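/- arXiv:2406.11918 — 5 statements merged into one kernel-verified Lean document; each statement's English description precedes it below -/
import Mathlib

section
/- Consider a finite linearly ordered set of players M and a finite set of servers S. Each player i chooses a strategy a_i ∈ {0} ∪ S. Given nonnegative constants β_{s,i} ≥ 0, φ_{s,i} ≥ 0, G_{s,i} ≥ 0 and u_i^loc ≥ 0 (for s ∈ S, i ∈ M), the utility of player i under profile A = (a_j)_{j∈M} is U_i(A) = u_i^loc if a_i = 0, and U_i(A) = G_{s,i} + β_{s,i}·Σ_{j∈M} 1{a_j = s}·β_{s,j} + φ_{s,i}·Σ_{j∈M} 1{a_j = s}·φ_{s,j} if a_i = s ∈ S. Define F(A) = Σ_{i∈M} Σ_{s∈S} 1{a_i = s}·(G_{s,i} + β_{s,i}·Σ_{j ≤ i} 1{a_j = s}·β_{s,j} + φ_{s,i}·Σ_{j ≤ i} 1{a_j = s}·φ_{s,j}) + Σ_{i∈M} 1{a_i = 0}·u_i^loc. Then for every profile A, every player m, and every alternative strategy a'_m, letting A' be the profile obtained from A by replacing a_m with a'_m, one has U_m(A) − U_m(A') = F(A) − F(A'); i.e., F is an exact potential function for this game. -/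
/-!
The utilities and `F` are built from a solo cost `v i (A i)` of each player (`soloCost`) and a
pair cost `w i j (A i) (A j)` (`pairCost`), zero unless `i` and `j` use the same server:
`U i A = v i (A i) + ∑ j, w i j (A i) (A j)`, while `F A` is the sum of all `v i (A i)` plus the
pair costs over `j ≤ i`, so that each unordered pair is counted once (`utility_eq`, `potential_eq`).
Since the pair cost is symmetric, the terms of `F A` that involve a fixed player `m` add up to
exactly `U m A` (`sum_le_eq_of_symm`). The remaining terms do not depend on `A m`, hence
`F - U m` is unchanged by a deviation of `m`.
-/

namespace Offloading

open Finset

variable {M S : Type*} [Fintype S] [DecidableEq S]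

/-- The cost that player `i` bears under the strategy `a` regardless of the others: the server
term `G s i` for `a = some s`, the local cost for `a = none`. -/
def soloCost (G : S → M → ℝ) (uloc : M → ℝ) (i : M) (a : Option S) : ℝ :=
  (∑ s, if a = some s then G s i else 0) + if a = none then uloc i else 0

/-- The congestion cost between players `i` and `j` under the strategies `a` and `b`; it vanishes
unless both are the same server. The case `i = j` is the load a player puts on itself. -/
def pairCost (β φ : S → M → ℝ) (i j : M) (a b : Option S) : ℝ :=
  ∑ s, if a = some s ∧ b = some s then β s i * β s j + φ s i * φ s j else 0

lemma pairCost_symm (β φ : S → M → ℝ) (i j : M) (a b : Option S) :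
    pairCost β φ i j a b = pairCost β φ j i b a := by
  unfold pairCost
  refine sum_congr rfl fun s _ => ?_
  simp only [and_comm, mul_comm]

/-- For a symmetric kernel, the terms of the triangular sum whose row or column is `m` make up the
full row `m`: those with `m ≤ i` are moved into row `m` by symmetry. -/
lemma sum_le_eq_of_symm [Fintype M] [LinearOrder M] (k : M → M → ℝ)
    (hk : ∀ i j, k i j = k j i) (m : M) :
    (∑ i, ∑ j, if j ≤ i then k i j else 0) =
      (∑ i ∈ univ.erase m, ∑ j ∈ univ.erase m, if j ≤ i then k i j else 0) + ∑ j, k m j := by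
  have row : ∀ f : M → ℝ, ∑ i, f i = (∑ i ∈ univ.erase m, f i) + f m := fun f =>
    (sum_erase_add univ f (mem_univ m)).symm
  have off : (∑ i ∈ univ.erase m, if m ≤ i then k i m else 0) +
      (∑ j ∈ univ.erase m, if j ≤ m then k m j else 0) = ∑ j ∈ univ.erase m, k m j := by
    rw [← sum_add_distrib]
    refine sum_congr rfl fun j hj => ?_
    rcases lt_or_gt_of_ne (ne_of_mem_erase hj) with h | h
    · simp [h.le, h.not_ge]
    · simp [h.le, h.not_ge, hk j m]
  rw [row, row (k m), row (fun j => if j ≤ m then k m j else 0),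
    sum_congr rfl (fun i _ => row (fun j => if j ≤ i then k i j else 0)), sum_add_distrib, ← off]
  simp only [le_refl, if_true]
  ring

/-- Collapsing the sum over servers: the congestion of player `i` at its chosen server, counted
over the players satisfying `p`, is a sum of pair costs. -/
lemma sum_server_eq [Fintype M] (β φ G : S → M → ℝ) (A : M → Option S) (i : M)
    (p : M → Prop) [DecidablePred p] :
    (∑ s, if A i = some s then
        (G s i + β s i * (∑ j, if p j ∧ A j = some s then β s j else 0)
               + φ s i * (∑ j, if p j ∧ A j = some s then φ s j else 0)) else 0) =
      (∑ s, if A i = some s then G s i else 0) +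
        ∑ j, if p j then pairCost β φ i j (A i) (A j) else 0 := by
  cases h : A i with
  | none => simp [pairCost]
  | some t =>
    simp only [pairCost, Option.some.injEq, ite_and, sum_ite_eq, mem_univ, if_true, mul_sum,
      add_assoc, ← sum_add_distrib]
    congr 1
    refine sum_congr rfl fun j _ => ?_
    split_ifs <;> simp

lemma utility_eq [Fintype M] (β φ G : S → M → ℝ) (uloc : M → ℝ)
    (U : M → (M → Option S) → ℝ)
    (hU0 : ∀ i A, A i = none → U i A = uloc i)
    (hUs : ∀ i A s, A i = some s →
      U i A = G s i + β s i * (∑ j, if A j = some s then β s j else 0)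
                    + φ s i * (∑ j, if A j = some s then φ s j else 0))
    (i : M) (A : M → Option S) :
    U i A = soloCost G uloc i (A i) + ∑ j, pairCost β φ i j (A i) (A j) := by
  have key := sum_server_eq β φ G A i (fun _ => True)
  cases h : A i with
  | none => simp [hU0 i A h, soloCost, pairCost]
  | some t =>
    rw [hUs i A t h]
    simpa [h, soloCost] using key

lemma potential_eq [Fintype M] [LinearOrder M] (β φ G : S → M → ℝ) (uloc : M → ℝ)
    (A : M → Option S) :
    (∑ i, ∑ s, if A i = some s then
          (G s i + β s i * (∑ j, if j ≤ i ∧ A j = some s then β s j else 0)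
                 + φ s i * (∑ j, if j ≤ i ∧ A j = some s then φ s j else 0))
        else 0)
      + ∑ i, (if A i = none then uloc i else 0) =
    (∑ i, soloCost G uloc i (A i)) +
      ∑ i, ∑ j, if j ≤ i then pairCost β φ i j (A i) (A j) else 0 := by
  rw [sum_congr rfl (fun i _ => sum_server_eq β φ G A i (fun j => j ≤ i))]
  simp only [soloCost, sum_add_distrib]
  ring

end Offloading

open Finset in
/-- Theorem 3: `F` is an exact potential function for the MUD-TOG.
Players `M` (finite, linearly ordered) choose strategies in `Option S`
(`none` = local computing, `some s` = offload to server `s`). -/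
theorem stmt_4 {M S : Type*} [Fintype M] [LinearOrder M] [Fintype S] [DecidableEq S]
    (β φ G : S → M → ℝ) (uloc : M → ℝ)
    (hβ : ∀ s i, 0 ≤ β s i) (hφ : ∀ s i, 0 ≤ φ s i)
    (hG : ∀ s i, 0 ≤ G s i) (huloc : ∀ i, 0 ≤ uloc i)
    (U : M → (M → Option S) → ℝ)
    (hU0 : ∀ i A, A i = none → U i A = uloc i)
    (hUs : ∀ i A s, A i = some s →
      U i A = G s i + β s i * (∑ j, if A j = some s then β s j else 0)
                    + φ s i * (∑ j, if A j = some s then φ s j else 0))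
    (F : (M → Option S) → ℝ)
    (hF : ∀ A, F A =
      (∑ i, ∑ s, if A i = some s then
          (G s i + β s i * (∑ j, if j ≤ i ∧ A j = some s then β s j else 0)
                 + φ s i * (∑ j, if j ≤ i ∧ A j = some s then φ s j else 0))
        else 0)
      + ∑ i, (if A i = none then uloc i else 0)) :
    ∀ (A : M → Option S) (m : M) (a' : Option S),
      U m A - U m (Function.update A m a') = F A - F (Function.update A m a') := by
  intro A m a'
  have hU := Offloading.utility_eq β φ G uloc U hU0 hUs m
  -- `F B - U m B` is a sum over the players other than `m`.
  have split : ∀ B : M → Option S, F B - U m B =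
      (∑ i ∈ univ.erase m, Offloading.soloCost G uloc i (B i)) +
        ∑ i ∈ univ.erase m, ∑ j ∈ univ.erase m,
          if j ≤ i then Offloading.pairCost β φ i j (B i) (B j) else 0 := by
    intro B
    rw [hF, Offloading.potential_eq, hU,
      Offloading.sum_le_eq_of_symm (fun i j => Offloading.pairCost β φ i j (B i) (B j))
        (fun i j => Offloading.pairCost_symm β φ i j (B i) (B j)) m,
      ← sum_erase_add univ (fun i => Offloading.soloCost G uloc i (B i)) (mem_univ m)]
    ring
  have indep : F (Function.update A m a') - U m (Function.update A m a') = F A - U m A := by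
    have upd : ∀ i ∈ univ.erase m, Function.update A m a' i = A i := fun i hi =>
      Function.update_of_ne (ne_of_mem_erase hi) _ _
    rw [split, split]
    congr 1
    · exact sum_congr rfl fun i hi => by rw [upd i hi]
    · exact sum_congr rfl fun i hi => sum_congr rfl fun j hj => by rw [upd i hi, upd j hj]
  linarith
end

section
/- Consider the MUD-TOG with M = |M| players, and suppose β_{s,i} ≤ β_max, φ_{s,i} ≤ φ_max, G_{s,i} ≤ G_max and u_i^loc ≤ U_max for all s ∈ S, i ∈ M, where all constants are nonnegative. Then (i) for every strategy profile A, 0 ≤ F(A) ≤ M²(β_max² + φ_max²) + M(G_max + U_max); and (ii) for every ε > 0, any finite sequence of profiles A⁰, A¹, …, A^k satisfying F(A^{i+1}) ≤ F(A^i) − ε for all 0 ≤ i < k has length k ≤ (M²(β_max² + φ_max²) + M(G_max + U_max))/ε. -/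
/-!
In the potential, each player contributes at most one nonzero term to the double sum over players
and resources, namely the one at its chosen resource (`sum_ite_eq_some_mem`). That term is at most
`Gmax + n * (βmax ^ 2 + φmax ^ 2)`, with `n` the number of players, since each congestion sum has
at most `n` terms (`congestion_mem`). The local cost of a player is at most `Umax`. Summing over
the `n` players bounds the potential. Along an improvement path the potential falls by `ε` at each
step, so `k * ε` is at most the total range of the potential.
-/

/-- A weighted congestion term `w * ∑ w j` over a subset of the players is nonnegative and at most
`n * c ^ 2` when all weights lie in `[0, c]`. -/
lemma congestion_mem {M : Type*} [Fintype M] (p : M → Prop) [DecidablePred p] (w : M → ℝ) (c : ℝ)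
    (h0 : ∀ j, 0 ≤ w j) (hc : ∀ j, w j ≤ c) (hc0 : 0 ≤ c) (i : M) :
    0 ≤ w i * (∑ j, if p j then w j else 0) ∧
      w i * (∑ j, if p j then w j else 0) ≤ (Fintype.card M : ℝ) * c ^ 2 := by
  have hT0 : 0 ≤ ∑ j, if p j then w j else 0 :=
    Finset.sum_nonneg fun j _ => by split_ifs <;> [exact h0 j; exact le_rfl]
  have hT : (∑ j, if p j then w j else 0) ≤ (Fintype.card M : ℝ) * c := by
    calc (∑ j, if p j then w j else 0) ≤ ∑ _j : M, c :=
          Finset.sum_le_sum fun j _ => by split_ifs <;> [exact hc j; exact hc0]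
      _ = (Fintype.card M : ℝ) * c := by simp
  refine ⟨mul_nonneg (h0 i) hT0, ?_⟩
  calc w i * (∑ j, if p j then w j else 0) ≤ c * ((Fintype.card M : ℝ) * c) :=
        mul_le_mul (hc i) hT hT0 hc0
    _ = (Fintype.card M : ℝ) * c ^ 2 := by ring

/-- A sum over `s` supported where `o = some s` has at most one nonzero term, so it inherits
bounds from its individual terms. -/
lemma sum_ite_eq_some_mem {S : Type*} [Fintype S] [DecidableEq S] (o : Option S) (f : S → ℝ)
    (c : ℝ) (hc : 0 ≤ c) (hf : ∀ s, 0 ≤ f s ∧ f s ≤ c) :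
    0 ≤ (∑ s, if o = some s then f s else 0) ∧ (∑ s, if o = some s then f s else 0) ≤ c := by
  cases o with
  | none => simpa using hc
  | some t => simpa using hf t

open Finset in
/-- Theorem 5: bounds on the MUD-TOG potential and on the length of any
ε-improvement path of the best-response dynamics. -/
theorem stmt_6 {M S : Type*} [Fintype M] [LinearOrder M] [Fintype S] [DecidableEq S]
    (β φ G : S → M → ℝ) (uloc : M → ℝ)
    (βmax φmax Gmax Umax : ℝ)
    (hβ0 : ∀ s i, 0 ≤ β s i) (hφ0 : ∀ s i, 0 ≤ φ s i)
    (hG0 : ∀ s i, 0 ≤ G s i) (huloc0 : ∀ i, 0 ≤ uloc i)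
    (hβmax0 : 0 ≤ βmax) (hφmax0 : 0 ≤ φmax) (hGmax0 : 0 ≤ Gmax) (hUmax0 : 0 ≤ Umax)
    (hβ : ∀ s i, β s i ≤ βmax) (hφ : ∀ s i, φ s i ≤ φmax)
    (hG : ∀ s i, G s i ≤ Gmax) (huloc : ∀ i, uloc i ≤ Umax)
    (F : (M → Option S) → ℝ)
    (hF : ∀ A, F A =
      (∑ i, ∑ s, if A i = some s then
          (G s i + β s i * (∑ j, if j ≤ i ∧ A j = some s then β s j else 0)
                 + φ s i * (∑ j, if j ≤ i ∧ A j = some s then φ s j else 0))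
        else 0)
      + ∑ i, (if A i = none then uloc i else 0)) :
    (∀ A : M → Option S, 0 ≤ F A ∧
      F A ≤ (Fintype.card M : ℝ) ^ 2 * (βmax ^ 2 + φmax ^ 2)
              + (Fintype.card M : ℝ) * (Gmax + Umax)) ∧
    (∀ ε : ℝ, 0 < ε → ∀ (k : ℕ) (Aseq : ℕ → (M → Option S)),
      (∀ i < k, F (Aseq (i + 1)) ≤ F (Aseq i) - ε) →
      (k : ℝ) ≤ ((Fintype.card M : ℝ) ^ 2 * (βmax ^ 2 + φmax ^ 2)
              + (Fintype.card M : ℝ) * (Gmax + Umax)) / ε) := by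
  have bounds : ∀ A : M → Option S, 0 ≤ F A ∧
      F A ≤ (Fintype.card M : ℝ) ^ 2 * (βmax ^ 2 + φmax ^ 2)
              + (Fintype.card M : ℝ) * (Gmax + Umax) := by
    intro A
    have hoff := fun i => sum_ite_eq_some_mem (A i)
      (fun s => G s i + β s i * (∑ j, if j ≤ i ∧ A j = some s then β s j else 0)
                 + φ s i * (∑ j, if j ≤ i ∧ A j = some s then φ s j else 0))
      (Gmax + (Fintype.card M : ℝ) * βmax ^ 2 + (Fintype.card M : ℝ) * φmax ^ 2)
      (by positivity) (fun s => by
        have h1 := congestion_mem (fun j => j ≤ i ∧ A j = some s) (β s) βmax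
          (hβ0 s) (hβ s) hβmax0 i
        have h2 := congestion_mem (fun j => j ≤ i ∧ A j = some s) (φ s) φmax
          (hφ0 s) (hφ s) hφmax0 i
        have h3 := hG0 s i
        have h4 := hG s i
        constructor <;> linarith [h1.1, h1.2, h2.1, h2.2])
    have hloc0 : 0 ≤ ∑ i, (if A i = none then uloc i else 0) :=
      Finset.sum_nonneg fun i _ => by split_ifs <;> [exact huloc0 i; exact le_rfl]
    have hloc : ∑ i, (if A i = none then uloc i else 0) ≤ ∑ _i : M, Umax :=
      Finset.sum_le_sum fun i _ => by split_ifs <;> [exact huloc i; exact hUmax0]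
    have hs0 := Finset.sum_nonneg fun i (_ : i ∈ (univ : Finset M)) => (hoff i).1
    have hs := Finset.sum_le_sum fun i (_ : i ∈ (univ : Finset M)) => (hoff i).2
    rw [Finset.sum_const, Finset.card_univ, nsmul_eq_mul] at hs hloc
    rw [hF A]
    exact ⟨add_nonneg hs0 hloc0, (add_le_add hs hloc).trans_eq (by ring)⟩
  refine ⟨bounds, fun ε hε k Aseq hstep => ?_⟩
  have hdrop : ∀ i ≤ k, F (Aseq i) ≤ F (Aseq 0) - i * ε := by
    intro i
    induction i with
    | zero => simp
    | succ i ih =>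
      intro hi
      have h1 := ih (by omega)
      have h2 := hstep i (by omega)
      push_cast
      linarith
  rw [le_div_iff₀ hε]
  linarith [hdrop k le_rfl, (bounds (Aseq k)).1, (bounds (Aseq 0)).2]
end

section
/- Consider the MUD-TOG with utilities U_i and aggregate cost U(A) = Σ_{m∈M} U_m(A). For a profile A, define Σ_G(A) = Σ_{m∈M} 1{a_m ∈ S}·G_{a_m,m} (the total weighted server computation-energy term of A). Let Â be a profile minimizing U over all profiles and let A* be any Nash equilibrium, i.e., a profile such that U_m(A*) ≤ U_m(A') for every player m and every profile A' obtained from A* by changing only player m's strategy. Then U(Â) ≤ U(A*) and U(A*) ≤ 3·U(Â) − (Σ_G(A*) + Σ_G(Â)). Consequently, if U(Â) > 0, the price of anarchy PoA = max over Nash equilibria A* of U(A*)/U(Â) satisfies 1 ≤ PoA ≤ 3 − (Σ_G(A*) + Σ_G(Â))/U(Â). -/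
/-!
Write `x_s(A)` and `y_s(A)` for the `β`- and `φ`-loads that the profile `A` puts on the server `s`.
Summing the utilities gives `U(A) = L(A) + Σ_G(A) + Q(A)`, where `L` collects the local costs and
`Q(A) = Σ_s (x_s(A)² + y_s(A)²)`.

If player `m` deviates from the equilibrium `A*` to its optimal choice `s`, the load on `s` grows by
at most the weight of `m` (`load_update_le`). Adding up the equilibrium inequalities and exchanging
the sums over players and servers (`sum_elim_mul_load`) gives
`U(A*) ≤ L(Â) + Σ_G(Â) + Σ_s (x_s(Â) x_s(A*) + y_s(Â) y_s(A*)) + (squared weights of the players)`.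
A squared weight is at most weight times load, so the last term is at most `Q(Â)`, and
`ab ≤ (a² + b²)/2` bounds the mixed term by `(Q(Â) + Q(A*))/2`; see `sum_elim_deviation_le`.
Replacing `Q(A*)` by `U(A*) - L(A*) - Σ_G(A*)` and rearranging,
`U(A*) ≤ 3 U(Â) - Σ_G(A*) - Σ_G(Â) - L(A*) - L(Â)`.
-/

namespace MudTog

variable {M S : Type*} [Fintype M] [DecidableEq S]

/-- The total `w`-weight of the players that choose server `s` in the profile `A`, where `none`
stands for local computation. -/
def load (w : S → M → ℝ) (A : M → Option S) (s : S) : ℝ :=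
  ∑ j, if A j = some s then w s j else 0

lemma sum_elim_mul_load [Fintype S] (w : S → M → ℝ) (A : M → Option S) (f : S → ℝ) :
    ∑ m, (A m).elim 0 (fun s => w s m * f s) = ∑ s, load w A s * f s := by
  simp only [load, Finset.sum_mul]
  rw [Finset.sum_comm]
  refine Finset.sum_congr rfl fun m _ => ?_
  cases h : A m <;> simp

lemma weight_le_load (w : S → M → ℝ) (hw : ∀ s i, 0 ≤ w s i) (A : M → Option S) {m : M} {s : S}
    (h : A m = some s) : w s m ≤ load w A s := by
  have := Finset.single_le_sum (f := fun j => if A j = some s then w s j else 0)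
    (fun j _ => by split_ifs <;> simp [hw]) (Finset.mem_univ m)
  simpa [h, load] using this

lemma load_update_le [DecidableEq M] (w : S → M → ℝ) (hw : ∀ s i, 0 ≤ w s i) (A : M → Option S)
    (m : M) (s : S) : load w (Function.update A m (some s)) s ≤ load w A s + w s m := by
  have h : w s m = ∑ j, if j = m then w s j else 0 := by simp
  rw [h, load, load, ← Finset.sum_add_distrib]
  refine Finset.sum_le_sum fun j _ => ?_
  by_cases hj : j = m
  · subst hj
    have := hw s j
    simp only [Function.update_self, if_true]
    split_ifs <;> linarith
  · simp [hj]

/-- The smoothness estimate: the congestion cost of all unilateral deviations from `A` to `B` is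
controlled by the quadratic loads of `B` and of `A`. -/
lemma sum_elim_deviation_le [Fintype S] (w : S → M → ℝ) (hw : ∀ s i, 0 ≤ w s i)
    (A B : M → Option S) :
    ∑ m, (B m).elim 0 (fun s => w s m * (load w A s + w s m)) ≤
      3 / 2 * ∑ s, load w B s * load w B s + 1 / 2 * ∑ s, load w A s * load w A s := by
  calc ∑ m, (B m).elim 0 (fun s => w s m * (load w A s + w s m))
      ≤ ∑ m, (B m).elim 0 (fun s => w s m * (load w A s + load w B s)) := by
        refine Finset.sum_le_sum fun m _ => ?_
        cases h : B m with
        | none => simp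
        | some s =>
          have := weight_le_load w hw B h
          exact mul_le_mul_of_nonneg_left (by linarith) (hw s m)
    _ = ∑ s, load w B s * (load w A s + load w B s) :=
        sum_elim_mul_load w B fun s => load w A s + load w B s
    _ ≤ _ := by
        rw [Finset.mul_sum, Finset.mul_sum, ← Finset.sum_add_distrib]
        refine Finset.sum_le_sum fun s _ => ?_
        nlinarith [sq_nonneg (load w A s - load w B s)]

end MudTog


open Finset in
/-- Theorem 6: price-of-anarchy bound for the MUD-TOG. For any Nash
equilibrium `A*` and centralized optimum `Â`:
`U(Â) ≤ U(A*)` and `U(A*) ≤ 3·U(Â) − (Σ_G(A*) + Σ_G(Â))`; hence, if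
`U(Â) > 0`, `1 ≤ U(A*)/U(Â) ≤ 3 − (Σ_G(A*) + Σ_G(Â))/U(Â)`. -/
theorem stmt_7 {M S : Type*} [Fintype M] [LinearOrder M] [Fintype S] [DecidableEq S]
    (β φ G : S → M → ℝ) (uloc : M → ℝ)
    (hβ : ∀ s i, 0 ≤ β s i) (hφ : ∀ s i, 0 ≤ φ s i)
    (hG : ∀ s i, 0 ≤ G s i) (huloc : ∀ i, 0 ≤ uloc i)
    (U : M → (M → Option S) → ℝ)
    (hU0 : ∀ i A, A i = none → U i A = uloc i)
    (hUs : ∀ i A s, A i = some s →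
      U i A = G s i + β s i * (∑ j, if A j = some s then β s j else 0)
                    + φ s i * (∑ j, if A j = some s then φ s j else 0))
    (Utot : (M → Option S) → ℝ) (hUtot : ∀ A, Utot A = ∑ m, U m A)
    (SG : (M → Option S) → ℝ)
    (hSG : ∀ A, SG A = ∑ m, (A m).elim 0 (fun s => G s m))
    (Ahat Astar : M → Option S)
    (hopt : ∀ A : M → Option S, Utot Ahat ≤ Utot A)
    (hne : ∀ (m : M) (a' : Option S), U m Astar ≤ U m (Function.update Astar m a')) :
    Utot Ahat ≤ Utot Astar ∧
    Utot Astar ≤ 3 * Utot Ahat - (SG Astar + SG Ahat) ∧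
    (0 < Utot Ahat →
      1 ≤ Utot Astar / Utot Ahat ∧
      Utot Astar / Utot Ahat ≤ 3 - (SG Astar + SG Ahat) / Utot Ahat) := by
  -- `L A` is the total local cost of the profile `A`.
  let L : (M → Option S) → ℝ := fun A => ∑ m, (A m).elim (uloc m) (fun _ => 0)
  have hL : ∀ A, 0 ≤ L A := fun A => Finset.sum_nonneg fun m _ => by
    cases A m <;> simp [huloc]
  have hdecomp : ∀ A, Utot A = L A + SG A + ∑ s, MudTog.load β A s * MudTog.load β A s
      + ∑ s, MudTog.load φ A s * MudTog.load φ A s := by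
    intro A
    rw [hUtot, hSG, ← MudTog.sum_elim_mul_load, ← MudTog.sum_elim_mul_load,
      ← Finset.sum_add_distrib, ← Finset.sum_add_distrib, ← Finset.sum_add_distrib]
    refine Finset.sum_congr rfl fun m _ => ?_
    cases h : A m with
    | none => simp [hU0 m A h]
    | some s => simp [hUs m A s h, MudTog.load]
  have hdev : Utot Astar ≤ L Ahat + SG Ahat
      + ∑ m, (Ahat m).elim 0 (fun s => β s m * (MudTog.load β Astar s + β s m))
      + ∑ m, (Ahat m).elim 0 (fun s => φ s m * (MudTog.load φ Astar s + φ s m)) := by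
    rw [hUtot, hSG, ← Finset.sum_add_distrib, ← Finset.sum_add_distrib,
      ← Finset.sum_add_distrib]
    refine Finset.sum_le_sum fun m _ => (hne m (Ahat m)).trans ?_
    cases h : Ahat m with
    | none => simp [hU0 m (Function.update Astar m none) (by simp)]
    | some s =>
      rw [hUs m (Function.update Astar m (some s)) s (by simp)]
      have h1 := mul_le_mul_of_nonneg_left (MudTog.load_update_le β hβ Astar m s) (hβ s m)
      have h2 := mul_le_mul_of_nonneg_left (MudTog.load_update_le φ hφ Astar m s) (hφ s m)
      simp only [MudTog.load, Option.elim_some] at h1 h2 ⊢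
      linarith
  have hbound : Utot Astar ≤ 3 * Utot Ahat - (SG Astar + SG Ahat) := by
    have h1 := MudTog.sum_elim_deviation_le β hβ Astar Ahat
    have h2 := MudTog.sum_elim_deviation_le φ hφ Astar Ahat
    linarith [hdecomp Astar, hdecomp Ahat, hL Astar, hL Ahat]
  refine ⟨hopt Astar, hbound, fun hpos => ⟨(one_le_div hpos).2 (hopt Astar), ?_⟩⟩
  rw [div_le_iff₀ hpos, sub_mul, div_mul_cancel₀ _ hpos.ne']
  exact hbound
end

section
/- Let T ≥ 1 be an integer, V > 0, W ≥ 0, C_gap ≥ 0 and C_opt real numbers. Let L : ℕ → ℝ satisfy L(1) = 0 and L(t) ≥ 0 for all t, and let C_s : ℕ → ℝ and c : ℕ → ℝ be such that Σ_{t=1}^T c(t) ≤ C_gap and, for every 1 ≤ t ≤ T, L(t+1) − L(t) + V·C_s(t) ≤ W + V·C_opt + c(t). Then (1/T)·Σ_{t=1}^T C_s(t) ≤ C_opt + (W·T + C_gap)/V. -/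
/-!
Summing the drift bounds over `1 ≤ t ≤ T` telescopes the Lyapunov terms to `L (T + 1) - L 1`, which
is nonnegative, so `V * ∑ Cs t ≤ T * (W + V * Copt) + Cgap`. Dividing by `V * T` gives the sharper
bound `Copt + (W + Cgap / T) / V`, which implies the claim because `W, Cgap ≥ 0` and `T ≥ 1`.
-/

open Finset in
/-- Performance bound (telescoping Lyapunov argument): per-slot drift bounds
imply the time-averaged cost bound
`(1/T)·Σ C_s(t) ≤ C_opt + (W·T + C_gap)/V`. -/
theorem stmt_13 (T : ℕ) (hT : 1 ≤ T) (V W Cgap Copt : ℝ)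
    (hV : 0 < V) (hW : 0 ≤ W) (hCgap : 0 ≤ Cgap)
    (L Cs c : ℕ → ℝ)
    (hL1 : L 1 = 0) (hL : ∀ t, 0 ≤ L t)
    (hc : ∑ t ∈ Finset.Icc 1 T, c t ≤ Cgap)
    (hdrift : ∀ t, 1 ≤ t → t ≤ T →
      L (t + 1) - L t + V * Cs t ≤ W + V * Copt + c t) :
    (1 / (T : ℝ)) * ∑ t ∈ Finset.Icc 1 T, Cs t ≤
      Copt + (W * (T : ℝ) + Cgap) / V := by
  -- Telescoped drift bound, using `L 1 = 0`.
  have key : ∀ n, n ≤ T → L (n + 1) + V * ∑ t ∈ Finset.Icc 1 n, Cs t ≤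
      n * (W + V * Copt) + ∑ t ∈ Finset.Icc 1 n, c t := by
    intro n
    induction n with
    | zero => intro _; simp [hL1]
    | succ k ih =>
      intro hk
      have h1 := ih (by omega)
      have h2 := hdrift (k + 1) (by omega) hk
      rw [Finset.sum_Icc_succ_top (by omega), Finset.sum_Icc_succ_top (by omega)]
      push_cast
      linarith
  have hT1 : (1 : ℝ) ≤ T := by exact_mod_cast hT
  have hsum : ∑ t ∈ Finset.Icc 1 T, Cs t ≤ T * Copt + (W * T + Cgap) / V := by
    rw [← sub_le_iff_le_add', le_div_iff₀ hV]
    linarith [key T le_rfl, hL (T + 1)]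
  -- The nonnegative error term is not divided by `T` in the claim, so `1 ≤ T` absorbs the loss.
  have herr : (W * T + Cgap) / V ≤ T * ((W * T + Cgap) / V) :=
    le_mul_of_one_le_left (by positivity) hT1
  rw [one_div_mul_eq_div, div_le_iff₀ (by linarith)]
  linarith
end

section
/- Consider the MUD-TOG: a finite linearly ordered set of players M, a finite set of servers S, strategies a_i ∈ {0} ∪ S, nonnegative constants β_{s,i}, φ_{s,i}, G_{s,i}, u_i^loc ≥ 0, utilities U_i(A) = u_i^loc if a_i = 0 and U_i(A) = G_{s,i} + β_{s,i}·Σ_j 1{a_j = s}β_{s,j} + φ_{s,i}·Σ_j 1{a_j = s}φ_{s,j} if a_i = s ∈ S, and potential F(A) = Σ_i Σ_s 1{a_i = s}(G_{s,i} + β_{s,i}Σ_{j≤i}1{a_j=s}β_{s,j} + φ_{s,i}Σ_{j≤i}1{a_j=s}φ_{s,j}) + Σ_i 1{a_i=0}u_i^loc. If A* is a profile minimizing F over all strategy profiles, then A* is a Nash equilibrium: for every player m and every alternative strategy a'_m, letting A' be A* with player m's strategy replaced by a'_m, one has U_m(A*) ≤ U_m(A'). -/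
/-!
`F` is an exact potential: when only player `m` changes strategy, `F` and `U m` change by the same
amount, so a minimizer of `F` admits no profitable deviation. Write `w A i j` for the interaction
of `i` and `j` (`β s i * β s j + φ s i * φ s j` if both are on server `s`, and `0` otherwise) and
`c A i` for the remaining cost of `i`, which depends on `A i` only. Then `U m A = c A m + ∑ j, w A m j`
and `F A = ∑ i, c A i + ∑ i, ∑ j ≤ i, w A i j`. The change in `w` is symmetric and lives on row and
column `m`, so summing it over the lower triangle `j ≤ i` gives the full sum over row `m`
(`sum_lower_eq_row`).
-/

/-- Column `m` below the diagonal is folded onto row `m` beyond the diagonal by symmetry. -/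
lemma sum_lower_eq_row {M : Type*} [Fintype M] [LinearOrder M] (m : M) (D : M → M → ℝ)
    (hsymm : ∀ i j, D i j = D j i) (hz : ∀ i j, i ≠ m → j ≠ m → D i j = 0) :
    ∑ i, ∑ j, (if j ≤ i then D i j else 0) = ∑ j, D m j := by
  have key : ∀ i, ∑ j, (if j ≤ i then D i j else 0)
      = (if i = m then ∑ j, (if j ≤ m then D m j else 0) else 0)
        + (if m < i then D m i else 0) := by
    intro i
    by_cases hi : i = m
    · subst hi; simp
    · rw [Finset.sum_eq_single m]
      · have : m ≤ i ↔ m < i := ⟨fun h => lt_of_le_of_ne h (Ne.symm hi), le_of_lt⟩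
        rw [if_neg hi, zero_add, hsymm i m]; simp only [this]
      · intro j _ hj
        simp [hz i j hi hj]
      · simp
  rw [Finset.sum_congr rfl fun i _ => key i]
  rw [Finset.sum_add_distrib, Finset.sum_ite_eq' Finset.univ m]
  simp only [Finset.mem_univ, if_true]
  rw [← Finset.sum_add_distrib]
  refine Finset.sum_congr rfl fun j _ => ?_
  by_cases h : j ≤ m
  · simp [h, not_lt.mpr h]
  · simp [h, not_le.mp h]

/-- The interaction of players `i` and `j` under the profile `A`; only the common server, if any,
contributes to the sum. -/
def interaction {M S : Type*} [Fintype S] [DecidableEq S] (β φ : S → M → ℝ)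
    (A : M → Option S) (i j : M) : ℝ :=
  ∑ s, if A i = some s ∧ A j = some s then β s i * β s j + φ s i * φ s j else 0

/-- The part of the cost of player `i` that does not depend on the other players. -/
def ownCost {M S : Type*} [Fintype S] [DecidableEq S] (G : S → M → ℝ) (uloc : M → ℝ)
    (A : M → Option S) (i : M) : ℝ :=
  (∑ s, if A i = some s then G s i else 0) + if A i = none then uloc i else 0


open Finset in
/-- A global minimizer of the MUD-TOG potential `F` is a Nash equilibrium. -/
theorem stmt_15 {M S : Type*} [Fintype M] [LinearOrder M] [Fintype S] [DecidableEq S]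
    (β φ G : S → M → ℝ) (uloc : M → ℝ)
    (hβ : ∀ s i, 0 ≤ β s i) (hφ : ∀ s i, 0 ≤ φ s i)
    (hG : ∀ s i, 0 ≤ G s i) (huloc : ∀ i, 0 ≤ uloc i)
    (U : M → (M → Option S) → ℝ)
    (hU0 : ∀ i A, A i = none → U i A = uloc i)
    (hUs : ∀ i A s, A i = some s →
      U i A = G s i + β s i * (∑ j, if A j = some s then β s j else 0)
                    + φ s i * (∑ j, if A j = some s then φ s j else 0))
    (F : (M → Option S) → ℝ)
    (hF : ∀ A, F A =
      (∑ i, ∑ s, if A i = some s then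
          (G s i + β s i * (∑ j, if j ≤ i ∧ A j = some s then β s j else 0)
                 + φ s i * (∑ j, if j ≤ i ∧ A j = some s then φ s j else 0))
        else 0)
      + ∑ i, (if A i = none then uloc i else 0))
    (Astar : M → Option S)
    (hmin : ∀ A : M → Option S, F Astar ≤ F A) :
    ∀ (m : M) (a' : Option S), U m Astar ≤ U m (Function.update Astar m a') := by
  have hU : ∀ m A, U m A = ownCost G uloc A m + ∑ j, interaction β φ A m j := by
    intro m A
    rcases h : A m with _ | s
    · rw [hU0 m A h]
      simp [ownCost, interaction, h]
    · rw [hUs m A s h]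
      simp only [ownCost, interaction, h, Option.some.injEq, ite_and, Finset.sum_ite_eq,
        Finset.mem_univ, if_true, reduceCtorEq, if_false, add_zero]
      rw [Finset.mul_sum, Finset.mul_sum, add_assoc, ← Finset.sum_add_distrib]
      congr 1
      refine Finset.sum_congr rfl fun j _ => ?_
      split_ifs <;> simp
  have hF' : ∀ A, F A = ∑ i, ownCost G uloc A i
      + ∑ i, ∑ j, (if j ≤ i then interaction β φ A i j else 0) := by
    intro A
    rw [hF, ← Finset.sum_add_distrib, ← Finset.sum_add_distrib]
    refine Finset.sum_congr rfl fun i _ => ?_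
    rcases h : A i with _ | s
    · simp [ownCost, interaction, h]
    · simp only [ownCost, interaction, h, Option.some.injEq, ite_and, Finset.sum_ite_eq,
        Finset.mem_univ, if_true, reduceCtorEq, if_false, add_zero]
      rw [Finset.mul_sum, Finset.mul_sum, add_assoc, ← Finset.sum_add_distrib]
      congr 1
      refine Finset.sum_congr rfl fun j _ => ?_
      split_ifs <;> simp
  intro m a'
  have hle := hmin (Function.update Astar m a')
  set B := Function.update Astar m a' with hB
  have hoff : ∀ i, i ≠ m → B i = Astar i := fun i hi => Function.update_of_ne hi _ _
  have hsymm : ∀ A i j, interaction β φ A i j = interaction β φ A j i := by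
    intro A i j
    refine Finset.sum_congr rfl fun s _ => ?_
    simp only [and_comm, mul_comm]
  have hw := sum_lower_eq_row m
    (fun i j => interaction β φ B i j - interaction β φ Astar i j)
    (fun i j => by rw [hsymm B, hsymm Astar])
    (fun i j hi hj => by simp [interaction, hoff i hi, hoff j hj])
  have hc : ∑ i, (ownCost G uloc B i - ownCost G uloc Astar i)
      = ownCost G uloc B m - ownCost G uloc Astar m := by
    refine Finset.sum_eq_single m (fun i _ hi => ?_) (by simp)
    simp [ownCost, hoff i hi]
  have hsplit : ∀ i j, (if j ≤ i then interaction β φ B i j - interaction β φ Astar i j else 0)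
      = (if j ≤ i then interaction β φ B i j else 0)
        - (if j ≤ i then interaction β φ Astar i j else 0) := by
    intro i j; split_ifs <;> simp
  simp only [hsplit, Finset.sum_sub_distrib] at hw hc
  rw [hF', hF'] at hle
  rw [hU, hU]
  linarith
end
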